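/- (UK pound price formula verification.) Let σ_S, σ_Y > 0, ρ ∈ ℝ with |ρ| < 1, r_p, r_d ∈ ℝ, T ∈ ℝ, c > 0, and set σ² = σ_S² + 2ρσ_Sσ_Y + σ_Y². Define, for S, Y > 0 and t < T, V(S, Y, t) = S·N(d₁) − c·Y·e^{−r_d(T−t)}·N(d₂), where d₁ = (ln(S/(c·Y)) + (r_d + σ²/2)(T−t)) / (σ√(T−t)) and d₂ = d₁ − σ√(T−t). Then V satisfies ∂V/∂t + (1/2)[σ_S²S² ∂²V/∂S² − 2ρσ_Sσ_Y S Y ∂²V/∂S∂Y + σ_Y²Y² ∂²V/∂Y²] + r_p S ∂V/∂S + (r_p − r_d)Y ∂V/∂Y − r_p V = 0 at every point (S, Y, t) with S, Y > 0 and t < T. -/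

import Mathlib

/-- The standard normal cumulative distribution function
`N(x) = (2π)^{-1/2} ∫_{-∞}^{x} e^{-u²/2} du`. -/
noncomputable def stdNormalCDF (x : ℝ) : ℝ :=
  (Real.sqrt (2 * Real.pi))⁻¹ * ∫ u in Set.Iic x, Real.exp (-u ^ 2 / 2)

/-!
Taking the asset `Y` as numéraire reduces the two-dimensional problem to Black–Scholes. Since
`V` is homogeneous of degree one in `(S, Y)`, it has the form `V(S, Y, t) = Y * F(S / Y, t)`, and
Euler's relations collapse the pricing operator applied to `V` to `Y` times the Black–Scholes
operator applied to `F`, with rate `r_d` and squared volatility `σ_S² + 2ρσ_Sσ_Y + σ_Y²`; the rate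
`r_p` cancels. Here `F` is the Black–Scholes price of a call with strike `c`. Its partial
derivatives are short because `x * φ(d₁) = c * exp(-r * τ) * φ(d₂)`, which cancels the terms coming
from the derivative of `d₁`.
-/

open Filter MeasureTheory ProbabilityTheory Real Set Topology

local notation "φ" => gaussianPDFReal 0 1

section StandardNormal

theorem hasDerivAt_setIntegral_Iic {E : Type*} [NormedAddCommGroup E] [NormedSpace ℝ E]
    [CompleteSpace E] {f : ℝ → E} {x : ℝ} (hf : Integrable f) (hx : ContinuousAt f x) :
    HasDerivAt (fun y => ∫ u in Iic y, f u) (f x) x := by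
  have h_split (y : ℝ) : ∫ u in Iic y, f u = (∫ u in Iic x, f u) + ∫ u in x..y, f u := by
    rw [← intervalIntegral.integral_Iic_sub_Iic hf.integrableOn hf.integrableOn, add_sub_cancel]
  exact ((intervalIntegral.integral_hasDerivAt_right IntervalIntegrable.refl
    hf.aestronglyMeasurable.stronglyMeasurableAtFilter hx).const_add _).congr_of_eventuallyEq
    (.of_forall h_split)

theorem stdNormalCDF_eq_setIntegral_gaussianPDFReal (x : ℝ) :
    stdNormalCDF x = ∫ u in Iic x, φ u := by
  simp only [stdNormalCDF, gaussianPDFReal, integral_const_mul, NNReal.coe_one, mul_one, sub_zero]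

theorem hasDerivAt_stdNormalCDF (x : ℝ) : HasDerivAt stdNormalCDF (φ x) x := by
  have h_cont : Continuous φ := by unfold gaussianPDFReal; fun_prop
  exact (hasDerivAt_setIntegral_Iic (integrable_gaussianPDFReal 0 1)
    h_cont.continuousAt).congr_of_eventuallyEq
    (.of_forall stdNormalCDF_eq_setIntegral_gaussianPDFReal)

theorem stdGaussianPDFReal_sub (x y : ℝ) : φ (x - y) = exp (x * y - y ^ 2 / 2) * φ x := by
  simp only [gaussianPDFReal, NNReal.coe_one, mul_one, sub_zero]
  rw [mul_left_comm, ← exp_add]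
  ring_nf

/-- The two contributions of the derivative of `d` cancel by `h_density`. -/
theorem hasDerivAt_mul_stdNormalCDF_sub {A B d g : ℝ → ℝ} {A' B' g' x : ℝ}
    (hA : HasDerivAt A A' x) (hB : HasDerivAt B B' x) (hd : DifferentiableAt ℝ d x)
    (hg : HasDerivAt g g' x) (h_density : A x * φ (d x) = B x * φ (d x - g x)) :
    HasDerivAt (fun y => A y * stdNormalCDF (d y) - B y * stdNormalCDF (d y - g y))
      (A' * stdNormalCDF (d x) - B' * stdNormalCDF (d x - g x) + A x * φ (d x) * g') x := by
  have hA_term := hA.mul ((hasDerivAt_stdNormalCDF (d x)).comp x hd.hasDerivAt)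
  have hB_term := hB.mul ((hasDerivAt_stdNormalCDF (d x - g x)).comp x (hd.hasDerivAt.sub hg))
  refine (hA_term.sub hB_term).congr_deriv ?_
  simp only [Function.comp_apply]
  linear_combination (deriv d x - g') * h_density

end StandardNormal

section BlackScholes

/-- The quantity `d₁` of the Black–Scholes formula with volatility `σ`, interest rate `r` and time
to maturity `τ`, as a function of the moneyness `m`, the ratio of spot price to strike. -/
noncomputable def blackScholesD1 (σ r τ m : ℝ) : ℝ :=
  (log m + (r + σ ^ 2 / 2) * τ) / (σ * √τ)

/-- The Black–Scholes price of a European call with strike `K` and time to maturity `τ` at the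
spot price `x`, for volatility `σ` and interest rate `r`. -/
noncomputable def blackScholesCall (σ r K τ x : ℝ) : ℝ :=
  x * stdNormalCDF (blackScholesD1 σ r τ (x / K))
    - K * exp (-(r * τ)) * stdNormalCDF (blackScholesD1 σ r τ (x / K) - σ * √τ)

/-- The Black–Scholes differential operator with squared volatility `v` and interest rate `r`,
applied to `F` at the spot price `x` and the calendar time `t`. -/
noncomputable def blackScholesOperator (v r : ℝ) (F : ℝ → ℝ → ℝ) (x t : ℝ) : ℝ :=
  deriv (F x) t + 1 / 2 * v * x ^ 2 * deriv (deriv (F · t)) x + r * x * deriv (F · t) x - r * F x t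

variable {σ r K τ x : ℝ}

theorem mul_gaussianPDFReal_blackScholesD1 {m : ℝ} (hσ : σ ≠ 0) (hτ : 0 < τ) (hm : 0 < m) :
    m * φ (blackScholesD1 σ r τ m)
      = exp (-(r * τ)) * φ (blackScholesD1 σ r τ m - σ * √τ) := by
  have h_d1_mul : blackScholesD1 σ r τ m * (σ * √τ) = log m + (r + σ ^ 2 / 2) * τ :=
    div_mul_cancel₀ _ (by positivity)
  have h_exponent : -(r * τ) + (blackScholesD1 σ r τ m * (σ * √τ) - (σ * √τ) ^ 2 / 2) = log m := by
    rw [h_d1_mul, mul_pow, sq_sqrt hτ.le]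
    ring
  rw [stdGaussianPDFReal_sub, ← mul_assoc, ← exp_add, h_exponent, exp_log hm]

theorem spot_mul_gaussianPDFReal_blackScholesD1 (hσ : σ ≠ 0) (hK : 0 < K) (hτ : 0 < τ)
    (hx : 0 < x) :
    x * φ (blackScholesD1 σ r τ (x / K))
      = K * exp (-(r * τ)) * φ (blackScholesD1 σ r τ (x / K) - σ * √τ) := by
  rw [mul_assoc, ← mul_gaussianPDFReal_blackScholesD1 hσ hτ (div_pos hx hK), ← mul_assoc,
    mul_div_cancel₀ _ hK.ne']

theorem hasDerivAt_blackScholesD1_spot (hK : K ≠ 0) (hx : x ≠ 0) :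
    HasDerivAt (fun x => blackScholesD1 σ r τ (x / K)) (1 / (x * (σ * √τ))) x := by
  refine (((((hasDerivAt_id' x).div_const K).log (by positivity)).add_const _).div_const
    _).congr_deriv ?_
  field_simp

theorem differentiableAt_blackScholesD1_maturity {m : ℝ} (hσ : σ ≠ 0) (hτ : 0 < τ) :
    DifferentiableAt ℝ (fun τ => blackScholesD1 σ r τ m) τ := by
  have h_sqrt : DifferentiableAt ℝ (√·) τ := (hasDerivAt_sqrt hτ.ne').differentiableAt
  exact .div (by fun_prop) (h_sqrt.const_mul σ) (by positivity)

theorem hasDerivAt_blackScholesCall_spot (hσ : σ ≠ 0) (hK : 0 < K) (hτ : 0 < τ) (hx : 0 < x) :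
    HasDerivAt (blackScholesCall σ r K τ) (stdNormalCDF (blackScholesD1 σ r τ (x / K))) x := by
  refine (hasDerivAt_mul_stdNormalCDF_sub (hasDerivAt_id' x) (hasDerivAt_const x _)
    (hasDerivAt_blackScholesD1_spot hK.ne' hx.ne').differentiableAt (hasDerivAt_const x _)
    (spot_mul_gaussianPDFReal_blackScholesD1 hσ hK hτ hx)).congr_deriv ?_
  ring

theorem hasDerivAt_deriv_blackScholesCall_spot (hσ : σ ≠ 0) (hK : 0 < K) (hτ : 0 < τ)
    (hx : 0 < x) :
    HasDerivAt (deriv (blackScholesCall σ r K τ))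
      (φ (blackScholesD1 σ r τ (x / K)) * (1 / (x * (σ * √τ)))) x := by
  refine ((hasDerivAt_stdNormalCDF _).comp x
    (hasDerivAt_blackScholesD1_spot hK.ne' hx.ne')).congr_of_eventuallyEq ?_
  filter_upwards [lt_mem_nhds hx] with z hz
  exact (hasDerivAt_blackScholesCall_spot hσ hK hτ hz).deriv

theorem hasDerivAt_blackScholesCall_maturity (hσ : σ ≠ 0) (hK : 0 < K) (hτ : 0 < τ)
    (hx : 0 < x) :
    HasDerivAt (fun τ => blackScholesCall σ r K τ x)
      (r * K * exp (-(r * τ)) * stdNormalCDF (blackScholesD1 σ r τ (x / K) - σ * √τ)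
        + x * φ (blackScholesD1 σ r τ (x / K)) * (σ / (2 * √τ))) τ := by
  have h_discount : HasDerivAt (fun τ => K * exp (-(r * τ))) (-(r * K * exp (-(r * τ)))) τ :=
    (((hasDerivAt_id' τ).const_mul r).fun_neg.exp.const_mul K).congr_deriv (by ring)
  have h_vol : HasDerivAt (fun τ => σ * √τ) (σ / (2 * √τ)) τ :=
    ((hasDerivAt_sqrt hτ.ne').const_mul σ).congr_deriv (mul_one_div _ _)
  refine (hasDerivAt_mul_stdNormalCDF_sub (hasDerivAt_const τ x) h_discount
    (differentiableAt_blackScholesD1_maturity hσ hτ) h_vol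
    (spot_mul_gaussianPDFReal_blackScholesD1 hσ hK hτ hx)).congr_deriv ?_
  ring

theorem blackScholesOperator_blackScholesCall {T t : ℝ} (hσ : σ ≠ 0) (hK : 0 < K) (ht : t < T)
    (hx : 0 < x) :
    blackScholesOperator (σ ^ 2) r (fun x t => blackScholesCall σ r K (T - t) x) x t = 0 := by
  have hτ : 0 < T - t := sub_pos.2 ht
  have h_theta := deriv_comp_const_sub (fun τ => blackScholesCall σ r K τ x) T t
  rw [(hasDerivAt_blackScholesCall_maturity hσ hK hτ hx).deriv] at h_theta
  rw [blackScholesOperator, h_theta, (hasDerivAt_deriv_blackScholesCall_spot hσ hK hτ hx).deriv,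
    (hasDerivAt_blackScholesCall_spot hσ hK hτ hx).deriv, blackScholesCall]
  field_simp
  ring

theorem mul_blackScholesCall_div {S Y : ℝ} (hY : Y ≠ 0) :
    Y * blackScholesCall σ r K τ (S / Y)
      = S * stdNormalCDF (blackScholesD1 σ r τ (S / (K * Y)))
        - K * Y * exp (-(r * τ)) * stdNormalCDF (blackScholesD1 σ r τ (S / (K * Y)) - σ * √τ) := by
  rw [blackScholesCall, div_div, mul_comm Y K]
  field_simp

end BlackScholes

section Numeraire

variable {𝕜 : Type*} [NontriviallyNormedField 𝕜] {f : 𝕜 → 𝕜} {s y : 𝕜}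

theorem deriv_mul_comp_div_left (hy : y ≠ 0) :
    deriv (fun s => y * f (s / y)) = fun s => deriv f (s / y) := by
  ext s
  simp only [div_eq_inv_mul, deriv_const_mul_field, deriv_comp_mul_left, smul_eq_mul,
    mul_inv_cancel_left₀ hy]

theorem deriv_deriv_mul_comp_div_left (hy : y ≠ 0) :
    deriv (deriv fun s => y * f (s / y)) s = deriv (deriv f) (s / y) / y := by
  rw [deriv_mul_comp_div_left hy]
  simp only [div_eq_inv_mul, deriv_comp_mul_left, smul_eq_mul]

theorem hasDerivAt_const_div (hy : y ≠ 0) : HasDerivAt (fun y => s / y) (-(s / y) / y) y := by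
  refine ((hasDerivAt_const y s).div (hasDerivAt_id' y) hy).congr_deriv ?_
  field_simp
  ring

theorem deriv_mul_comp_div_right (hy : y ≠ 0) (hf : DifferentiableAt 𝕜 f (s / y)) :
    deriv (fun y => y * f (s / y)) y = f (s / y) - s / y * deriv f (s / y) := by
  refine (((hasDerivAt_id' y).mul
    (hf.hasDerivAt.comp y (hasDerivAt_const_div hy))).congr_deriv ?_).deriv
  simp only [Function.comp_apply]
  field_simp
  ring

theorem hasDerivAt_sub_mul_deriv {x : 𝕜} (hf : DifferentiableAt 𝕜 f x)
    (hf' : DifferentiableAt 𝕜 (deriv f) x) :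
    HasDerivAt (fun x => f x - x * deriv f x) (-(x * deriv (deriv f) x)) x :=
  (hf.hasDerivAt.sub ((hasDerivAt_id' x).mul hf'.hasDerivAt)).congr_deriv (by ring)

theorem deriv_deriv_mul_comp_div_left_right (hy : y ≠ 0)
    (hf : ∀ᶠ x in 𝓝 (s / y), DifferentiableAt 𝕜 f x)
    (hf' : DifferentiableAt 𝕜 (deriv f) (s / y)) :
    deriv (fun s => deriv (fun y => y * f (s / y)) y) s
      = -(s / y * deriv (deriv f) (s / y)) / y := by
  refine (((hasDerivAt_sub_mul_deriv hf.self_of_nhds hf').comp s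
    ((hasDerivAt_id' s).div_const y)).congr_of_eventuallyEq ?_).deriv.trans (mul_one_div _ _)
  filter_upwards [(continuous_id.div_const y).continuousAt.eventually hf] with s hs
  exact deriv_mul_comp_div_right hy hs

theorem deriv_deriv_mul_comp_div_right (hy : y ≠ 0)
    (hf : ∀ᶠ x in 𝓝 (s / y), DifferentiableAt 𝕜 f x)
    (hf' : DifferentiableAt 𝕜 (deriv f) (s / y)) :
    deriv (deriv fun y => y * f (s / y)) y = (s / y) ^ 2 * deriv (deriv f) (s / y) / y := by
  have h_ratio := hasDerivAt_const_div (s := s) hy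
  refine ((((hasDerivAt_sub_mul_deriv hf.self_of_nhds hf').comp y
    h_ratio).congr_of_eventuallyEq ?_).congr_deriv (by ring)).deriv
  filter_upwards [h_ratio.continuousAt.eventually hf, eventually_ne_nhds hy] with y hy_diff hy
  exact deriv_mul_comp_div_right hy hy_diff

end Numeraire

section PricingOperator

/-- The pricing operator of the UK pound problem, applied to `V` at the asset prices `S`, `Y` and
the time `t`: the two assets have volatilities `σS`, `σY`, and `ρ` enters the cross term with a
minus sign; `rp` and `rd` are the interest rates. -/
noncomputable def gbpPricingOperator (σS σY ρ rp rd : ℝ) (V : ℝ → ℝ → ℝ → ℝ) (S Y t : ℝ) : ℝ :=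
  deriv (fun τ => V S Y τ) t
    + (1 / 2) * (σS ^ 2 * S ^ 2 * deriv (deriv (fun s => V s Y t)) S
        - 2 * ρ * σS * σY * S * Y * deriv (fun s => deriv (fun y => V s y t) Y) S
        + σY ^ 2 * Y ^ 2 * deriv (deriv (fun y => V S y t)) Y)
    + rp * S * deriv (fun s => V s Y t) S
    + (rp - rd) * Y * deriv (fun y => V S y t) Y
    - rp * V S Y t

variable {σS σY ρ rp rd S Y t : ℝ}

theorem gbpPricingOperator_congr {V W : ℝ → ℝ → ℝ → ℝ}
    (h : ∀ᶠ s in 𝓝 S, ∀ᶠ y in 𝓝 Y, ∀ᶠ τ in 𝓝 t, V s y τ = W s y τ) :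
    gbpPricingOperator σS σY ρ rp rd V S Y t = gbpPricingOperator σS σY ρ rp rd W S Y t := by
  have h_time : (fun τ => V S Y τ) =ᶠ[𝓝 t] fun τ => W S Y τ := h.self_of_nhds.self_of_nhds
  have h_left : (fun s => V s Y t) =ᶠ[𝓝 S] fun s => W s Y t :=
    h.mono fun _ hs => hs.self_of_nhds.self_of_nhds
  have h_right : ∀ᶠ s in 𝓝 S, (fun y => V s y t) =ᶠ[𝓝 Y] fun y => W s y t :=
    h.mono fun _ hs => hs.mono fun _ hy => hy.self_of_nhds
  have h_mixed : (fun s => deriv (fun y => V s y t) Y)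
      =ᶠ[𝓝 S] fun s => deriv (fun y => W s y t) Y :=
    h_right.mono fun _ hs => hs.deriv_eq
  simp only [gbpPricingOperator, h_time.deriv_eq, h_left.deriv.deriv_eq, h_mixed.deriv_eq,
    h_right.self_of_nhds.deriv.deriv_eq, h_left.deriv_eq, h_right.self_of_nhds.deriv_eq,
    h_time.self_of_nhds]

theorem gbpPricingOperator_mul_comp_div {F : ℝ → ℝ → ℝ} (hY : Y ≠ 0)
    (hF : ∀ᶠ x in 𝓝 (S / Y), DifferentiableAt ℝ (F · t) x)
    (hF' : DifferentiableAt ℝ (deriv (F · t)) (S / Y)) :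
    gbpPricingOperator σS σY ρ rp rd (fun s y τ => y * F (s / y) τ) S Y t
      = Y * blackScholesOperator (σS ^ 2 + 2 * ρ * σS * σY + σY ^ 2) rd F (S / Y) t := by
  rw [gbpPricingOperator, blackScholesOperator, deriv_const_mul_field,
    deriv_deriv_mul_comp_div_left (f := (F · t)) hY,
    deriv_deriv_mul_comp_div_left_right hY hF hF', deriv_deriv_mul_comp_div_right hY hF hF',
    deriv_mul_comp_div_left (f := (F · t)) hY, deriv_mul_comp_div_right hY hF.self_of_nhds]
  field_simp
  ring

theorem gbpPricingOperator_mul_blackScholesCall {T c σ : ℝ} (hc : 0 < c) (hσ : σ ≠ 0)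
    (hσ_sq : σ ^ 2 = σS ^ 2 + 2 * ρ * σS * σY + σY ^ 2) (hS : 0 < S) (hY : 0 < Y) (ht : t < T) :
    gbpPricingOperator σS σY ρ rp rd
      (fun s y τ => y * blackScholesCall σ rd c (T - τ) (s / y)) S Y t = 0 := by
  have hx : 0 < S / Y := div_pos hS hY
  have hτ : 0 < T - t := sub_pos.2 ht
  rw [gbpPricingOperator_mul_comp_div (F := fun x t => blackScholesCall σ rd c (T - t) x) hY.ne'
    ((lt_mem_nhds hx).mono fun x hx =>
      (hasDerivAt_blackScholesCall_spot hσ hc hτ hx).differentiableAt)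
    (hasDerivAt_deriv_blackScholesCall_spot hσ hc hτ hx).differentiableAt,
    ← hσ_sq, blackScholesOperator_blackScholesCall hσ hc ht hx, mul_zero]

end PricingOperator

theorem sq_add_two_mul_mul_add_sq_pos {a b ρ : ℝ} (ha : 0 < a) (hb : 0 < b) (hρ : -1 < ρ) :
    0 < a ^ 2 + 2 * ρ * a * b + b ^ 2 := by
  have h_cross : 0 < (1 + ρ) * (a * b) := mul_pos (by linarith) (mul_pos ha hb)
  linear_combination sq_nonneg (a - b) + 2 * h_cross

theorem gbp_price_formula_verification_general {σS σY ρ rp rd T c σ : ℝ} (hc : 0 < c)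
    (hσ : σ ≠ 0) (hσ_sq : σ ^ 2 = σS ^ 2 + 2 * ρ * σS * σY + σY ^ 2) {V : ℝ → ℝ → ℝ → ℝ}
    (hV : ∀ S Y t : ℝ, 0 < S → 0 < Y → t < T →
      V S Y t = S * stdNormalCDF (blackScholesD1 σ rd (T - t) (S / (c * Y)))
        - c * Y * exp (-(rd * (T - t)))
          * stdNormalCDF (blackScholesD1 σ rd (T - t) (S / (c * Y)) - σ * √(T - t)))
    {S Y t : ℝ} (hS : 0 < S) (hY : 0 < Y) (ht : t < T) :
    gbpPricingOperator σS σY ρ rp rd V S Y t = 0 := by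
  rw [← gbpPricingOperator_mul_blackScholesCall hc hσ hσ_sq hS hY ht]
  apply gbpPricingOperator_congr
  filter_upwards [lt_mem_nhds hS] with s hs
  filter_upwards [lt_mem_nhds hY] with y hy
  filter_upwards [gt_mem_nhds ht] with τ hτ
  rw [hV s y τ hs hy hτ, mul_blackScholesCall_div hy.ne']

/-- UK pound price formula verification: the explicit formula satisfies the
two-dimensional pricing PDE. -/
theorem gbp_price_formula_verification (σS σY ρ rp rd T c : ℝ)
    (hσS : 0 < σS) (hσY : 0 < σY) (hρ : |ρ| < 1) (hc : 0 < c)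
    (σ2 : ℝ) (hσ2 : σ2 = σS ^ 2 + 2 * ρ * σS * σY + σY ^ 2)
    (V : ℝ → ℝ → ℝ → ℝ)
    (hV : ∀ S Y t : ℝ, 0 < S → 0 < Y → t < T →
      V S Y t = S * stdNormalCDF
            ((Real.log (S / (c * Y)) + (rd + σ2 / 2) * (T - t))
              / (Real.sqrt σ2 * Real.sqrt (T - t)))
          - c * Y * Real.exp (-(rd * (T - t))) * stdNormalCDF
            ((Real.log (S / (c * Y)) + (rd + σ2 / 2) * (T - t))
                / (Real.sqrt σ2 * Real.sqrt (T - t))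
              - Real.sqrt σ2 * Real.sqrt (T - t))) :
    ∀ S Y t : ℝ, 0 < S → 0 < Y → t < T →
      deriv (fun τ => V S Y τ) t
          + (1 / 2) * (σS ^ 2 * S ^ 2 * deriv (deriv (fun s => V s Y t)) S
              - 2 * ρ * σS * σY * S * Y
                  * deriv (fun s => deriv (fun y => V s y t) Y) S
              + σY ^ 2 * Y ^ 2 * deriv (deriv (fun y => V S y t)) Y)
          + rp * S * deriv (fun s => V s Y t) S
          + (rp - rd) * Y * deriv (fun y => V S y t) Y
          - rp * V S Y t = 0 := by
  have hσ2_pos : 0 < σ2 := hσ2 ▸ sq_add_two_mul_mul_add_sq_pos hσS hσY (abs_lt.1 hρ).1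
  have hσ_sq : √σ2 ^ 2 = σ2 := sq_sqrt hσ2_pos.le
  intro S Y t
  exact gbp_price_formula_verification_general hc (sqrt_pos.2 hσ2_pos).ne' (hσ_sq.trans hσ2)
    (by simpa only [blackScholesD1, hσ_sq] using hV)
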